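/- Let R be a commutative ring whose projective modules are locally free (e.g. R noetherian), A a locally free R-module, and 0 → I → P → A → 0 an exact sequence of R-modules with P free. Then I is a locally free R-module. -/

import Mathlib

/-- A module `M` over `R` is locally free (for the Zariski topology) if there
are elements `s i` of `R` generating the unit ideal such that each localized
module `M_{s i}` is free over `R_{s i}`. -/
def IsLocallyFreeModule (R M : Type) [CommRing R] [AddCommGroup M] [Module R M] : Prop :=
  ∃ (ι : Type) (s : ι → R), Ideal.span (Set.range s) = ⊤ ∧
    ∀ i, Module.Free (Localization.Away (s i))
      (LocalizedModule (Submonoid.powers (s i)) M)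

namespace LocFree

variable {R : Type} [CommRing R] {P A : Type} [AddCommGroup P] [Module R P]
    [AddCommGroup A] [Module R A]

/-- localization map -/
noncomputable abbrev mkL (R : Type) [CommRing R] (M : Type) [AddCommGroup M] [Module R M] (r : R) :
    M →ₗ[R] LocalizedModule (Submonoid.powers r) M :=
  LocalizedModule.mkLinearMap (Submonoid.powers r) M

/-- localized map -/
noncomputable abbrev mapL {M N : Type} [AddCommGroup M] [Module R M] [AddCommGroup N] [Module R N]
    (r : R) (h : M →ₗ[R] N) :
    LocalizedModule (Submonoid.powers r) M →ₗ[R] LocalizedModule (Submonoid.powers r) N :=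
  IsLocalizedModule.map (Submonoid.powers r) (mkL R M r) (mkL R N r) h

lemma mapL_mk {M N : Type} [AddCommGroup M] [Module R M] [AddCommGroup N] [Module R N]
    (r : R) (h : M →ₗ[R] N) (x : M) : mapL r h (mkL R M r x) = mkL R N r (h x) :=
  IsLocalizedModule.map_apply _ _ _ _ _

lemma mk_surj {M : Type} [AddCommGroup M] [Module R M] (r : R)
    (y : LocalizedModule (Submonoid.powers r) M) : ∃ (n : ℕ) (x : M), r ^ n • y = mkL R M r x := by
  obtain ⟨⟨x, ⟨_, n, rfl⟩⟩, h⟩ := IsLocalizedModule.surj (Submonoid.powers r) (mkL R M r) y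
  exact ⟨n, x, h⟩

lemma mk_eq {M : Type} [AddCommGroup M] [Module R M] (r : R) {x : M}
    (h : mkL R M r x = 0) : ∃ n : ℕ, r ^ n • x = 0 := by
  obtain ⟨⟨_, n, rfl⟩, h⟩ := (IsLocalizedModule.eq_zero_iff (Submonoid.powers r) (mkL R M r)).1 h
  exact ⟨n, h⟩

lemma smul_cancel {M : Type} [AddCommGroup M] [Module R M] (r : R) (n : ℕ)
    {y : LocalizedModule (Submonoid.powers r) M} (h : r ^ n • y = 0) : y = 0 := by
  have := IsLocalizedModule.smul_injective (mkL R M r) (⟨r ^ n, n, rfl⟩ : Submonoid.powers r)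
  apply this
  simpa [Submonoid.smul_def] using h

lemma smul_zero_mono {M : Type} [AddCommGroup M] [Module R M] (r : R) {n m : ℕ} (hnm : n ≤ m)
    {y : M} (h : r ^ n • y = 0) : r ^ m • y = 0 := by
  obtain ⟨c, rfl⟩ := Nat.exists_eq_add_of_le hnm
  rw [pow_add, mul_comm, mul_smul, h, smul_zero]

/-- A lift of `σ (π x)` up to a power of `r`. -/
lemma exists_lift (π : P →ₗ[R] A) (r : R) (x : P) (w : LocalizedModule (Submonoid.powers r) P)
    (hw : mapL r π w = mkL R A r (π x)) :
    ∃ (n : ℕ) (z : P), mkL R P r z = r ^ n • w ∧ π z = r ^ n • π x := by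
  obtain ⟨n, z, hz⟩ := mk_surj r w
  have h1 : mkL R A r (π z - r ^ n • π x) = 0 := by
    rw [map_sub, map_smul, ← hw, ← mapL_mk, ← hz, map_smul, sub_self]
  obtain ⟨m, hm⟩ := mk_eq r h1
  refine ⟨m + n, r ^ m • z, ?_, ?_⟩
  · rw [map_smul, ← hz, pow_add, mul_smul]
  · rw [map_smul, pow_add, mul_smul]
    rw [smul_sub, sub_eq_zero] at hm
    exact hm

lemma local_step {κ : Type} (b : Module.Basis κ R P) (π : P →ₗ[R] A) (r : R)
    (σ : A →ₗ[R] LocalizedModule (Submonoid.powers r) P)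
    (hσ : ∀ a, mapL r π (σ a) = mkL R A r a) (k : κ → P)
    (hk : ∀ j, ∃ n : ℕ, mkL R P r (k j) = r ^ n • (mkL R P r (b j) - σ (π (b j))))
    (θ : P →ₗ[R] P) (hθ : ∀ x, π (θ x) = π x) (U : Set κ) (hU : ∀ j ∈ U, θ (k j) = 0)
    (F : Finset P) (hF : ∀ x ∈ F, π x = 0) :
    ∃ (M : ℕ) (y : P →ₗ[R] P), (∀ x, π (y x) = r ^ M • π x) ∧
      (∀ j ∈ U, y (b j) = r ^ M • θ (b j)) ∧ ∀ x ∈ F, y x = 0 := by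
  classical
  set ρ : P →ₗ[R] LocalizedModule (Submonoid.powers r) P := mapL r θ ∘ₗ σ ∘ₗ π with hρ
  have hπθ : ∀ w, mapL r π (mapL r θ w) = mapL r π w := by
    intro w
    obtain ⟨n, z, hz⟩ := mk_surj r w
    rw [← sub_eq_zero]
    apply smul_cancel r n
    rw [smul_sub, ← map_smul, ← map_smul, ← map_smul, hz, mapL_mk, mapL_mk, mapL_mk, hθ, sub_self]
  have hρπ : ∀ x, mapL r π (ρ x) = mkL R A r (π x) := by
    intro x
    simp only [hρ, LinearMap.comp_apply]
    rw [hπθ, hσ]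
  have hρU : ∀ j ∈ U, ρ (b j) = mkL R P r (θ (b j)) := by
    intro j hj
    obtain ⟨n, hn⟩ := hk j
    have h1 : r ^ n • (mkL R P r (θ (b j)) - ρ (b j)) = 0 := by
      rw [← mapL_mk, hρ, LinearMap.comp_apply, LinearMap.comp_apply, ← map_sub, ← map_smul, ← hn,
        mapL_mk, hU j hj, map_zero]
    exact (sub_eq_zero.1 (smul_cancel r n h1)).symm
  have hex : ∀ j, ∃ (n : ℕ) (z : P), mkL R P r z = r ^ n • ρ (b j) ∧ π z = r ^ n • π (b j) ∧
      (j ∈ U → n = 0 ∧ z = θ (b j)) := by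
    intro j
    by_cases hj : j ∈ U
    · exact ⟨0, θ (b j), by simp [hρU j hj], by simp [hθ], fun _ => ⟨rfl, rfl⟩⟩
    · obtain ⟨n, z, h1, h2⟩ := exists_lift π r (b j) (ρ (b j)) (hρπ _)
      exact ⟨n, z, h1, h2, fun h => absurd h hj⟩
  choose n z hz1 hz2 hz3 using hex
  set J : Finset κ := F.biUnion (fun x => (b.repr x).support) with hJ
  set N : ℕ := J.sup n with hN
  set y : P →ₗ[R] P := b.constr R
    (fun j => if n j ≤ N then r ^ (N - n j) • z j else r ^ N • b j) with hy
  have hyb : ∀ j, y (b j) = if n j ≤ N then r ^ (N - n j) • z j else r ^ N • b j := by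
    intro j
    rw [hy, Module.Basis.constr_basis]
  have hyπ : ∀ x, π (y x) = r ^ N • π x := by
    have : π ∘ₗ y = r ^ N • π := by
      apply b.ext
      intro j
      rw [LinearMap.comp_apply, hyb, LinearMap.smul_apply]
      split_ifs with h
      · rw [map_smul, hz2, ← mul_smul, ← pow_add, Nat.sub_add_cancel h]
      · rw [map_smul]
    intro x
    exact LinearMap.congr_fun this x
  have hyU : ∀ j ∈ U, y (b j) = r ^ N • θ (b j) := by
    intro j hj
    rw [hyb, (hz3 j hj).1, (hz3 j hj).2]
    simp
  have hyJ : ∀ j ∈ J, mkL R P r (y (b j)) = r ^ N • ρ (b j) := by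
    intro j hj
    have h : n j ≤ N := Finset.le_sup hj
    rw [hyb, if_pos h, map_smul, hz1, ← mul_smul, ← pow_add, Nat.sub_add_cancel h]
  have hyF : ∀ x ∈ F, mkL R P r (y x) = 0 := by
    intro x hx
    have h1 : mkL R P r (y x) = r ^ N • ρ x := by
      conv_lhs => rw [← b.linearCombination_repr x]
      conv_rhs => rw [← b.linearCombination_repr x]
      simp only [Finsupp.linearCombination_apply, Finsupp.sum, map_sum, map_smul, Finset.smul_sum]
      refine Finset.sum_congr rfl fun j hj => ?_
      rw [hyJ j (Finset.mem_biUnion.2 ⟨x, hx, hj⟩), smul_comm]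
    rw [h1, hρ, LinearMap.comp_apply, LinearMap.comp_apply, hF x hx, map_zero, map_zero, smul_zero]
  have hm : ∀ x : P, ∃ m : ℕ, x ∈ F → r ^ m • y x = 0 := by
    intro x
    by_cases hx : x ∈ F
    · obtain ⟨m, hm⟩ := mk_eq r (hyF x hx)
      exact ⟨m, fun _ => hm⟩
    · exact ⟨0, fun h => absurd h hx⟩
  choose m hm using hm
  refine ⟨F.sup m + N, r ^ (F.sup m) • y, ?_, ?_, ?_⟩
  · intro x
    rw [LinearMap.smul_apply, map_smul, hyπ, pow_add, mul_smul]
  · intro j hj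
    rw [LinearMap.smul_apply, hyU j hj, pow_add, mul_smul]
  · intro x hx
    exact smul_zero_mono r (Finset.le_sup hx) (hm x hx)

/-- The data we work with. -/
structure Data {κ : Type} (b : Module.Basis κ R P) (π : P →ₗ[R] A) (S : Finset R)
    (k : S → κ → P) : Prop where
  span : Ideal.span (S : Set R) = ⊤
  ker : ∀ i j, π (k i j) = 0
  loc : ∀ i : S, ∃ σ : A →ₗ[R] LocalizedModule (Submonoid.powers (i : R)) P,
    (∀ a, mapL (i : R) π (σ a) = mkL R A (i : R) a) ∧
    ∀ j, ∃ n : ℕ, mkL R P (i : R) (k i j) =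
      (i : R) ^ n • (mkL R P (i : R) (b j) - σ (π (b j)))

section
variable {κ : Type} {b : Module.Basis κ R P} {π : P →ₗ[R] A} {S : Finset R} {k : S → κ → P}

lemma Data.step (D : Data b π S k)
    (θ : P →ₗ[R] P) (hθ : ∀ x, π (θ x) = π x) (U : Set κ) (hU : ∀ i, ∀ j ∈ U, θ (k i j) = 0)
    (F : Finset P) (hF : ∀ x ∈ F, π x = 0) :
    ∃ (y : P →ₗ[R] P), (∀ x, π (y x) = π x) ∧
      (∀ j ∈ U, y (b j) = θ (b j)) ∧ ∀ x ∈ F, y x = 0 := by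
  let I : Ideal R :=
    { carrier := {c | ∃ (y : P →ₗ[R] P), (∀ x, π (y x) = c • π x) ∧
        (∀ j ∈ U, y (b j) = c • θ (b j)) ∧ ∀ x ∈ F, y x = 0}
      zero_mem' := ⟨0, by simp, by simp, by simp⟩
      add_mem' := by
        rintro c d ⟨y, h1, h2, h3⟩ ⟨y', h1', h2', h3'⟩
        refine ⟨y + y', ?_, ?_, ?_⟩
        · intro x; simp [h1, h1', add_smul]
        · intro j hj; simp [h2 j hj, h2' j hj, add_smul]
        · intro x hx; simp [h3 x hx, h3' x hx]
      smul_mem' := by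
        rintro c d ⟨y, h1, h2, h3⟩
        refine ⟨c • y, ?_, ?_, ?_⟩
        · intro x; simp [h1, mul_smul]
        · intro j hj; simp [h2 j hj, mul_smul]
        · intro x hx; simp [h3 x hx] }
  have key : ∀ i : S, ∃ M : ℕ, (i : R) ^ M ∈ I := by
    intro i
    obtain ⟨σ, hσ, hk⟩ := D.loc i
    obtain ⟨M, y, h⟩ := local_step b π i σ hσ (k i) hk θ hθ U (hU i) F hF
    exact ⟨M, y, h⟩
  choose M hM using key
  have h1 : (1 : R) ∈ I := by
    have h2 := Ideal.span_range_pow_eq_top (S : Set R) D.span M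
    have h3 : Ideal.span (Set.range fun x : (S : Set R) => x.1 ^ M x) ≤ I := by
      rw [Ideal.span_le]
      rintro _ ⟨x, rfl⟩
      exact hM x
    exact h3 (h2 ▸ Submodule.mem_top)
  obtain ⟨y, h1, h2, h3⟩ := h1
  exact ⟨y, by simpa using h1, by simpa using h2, h3⟩

lemma Data.kill (D : Data b π S k) (θ : P →ₗ[R] P) (h : ∀ i j, θ (k i j) = 0) (x : P)
    (hx : π x = 0) : θ x = 0 := by
  have key : ∀ i : S, ∃ M : ℕ, (i : R) ^ M • θ x = 0 := by
    intro i
    obtain ⟨σ, hσ, hk⟩ := D.loc i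
    have h0 : mapL (i : R) θ ∘ₗ (mkL R P (i : R) - σ ∘ₗ π) = 0 := by
      apply b.ext
      intro j
      obtain ⟨n, hn⟩ := hk j
      apply smul_cancel (i : R) n
      rw [LinearMap.comp_apply, LinearMap.sub_apply, LinearMap.comp_apply, ← map_smul, ← hn,
        mapL_mk, h, map_zero]
    have h1 := LinearMap.congr_fun h0 x
    rw [LinearMap.comp_apply, LinearMap.sub_apply, LinearMap.comp_apply, hx, map_zero, sub_zero,
      mapL_mk, LinearMap.zero_apply] at h1
    exact mk_eq _ h1
  choose M hM using key
  have h2 := Ideal.span_range_pow_eq_top (S : Set R) D.span M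
  have h3 : Ideal.span (Set.range fun x : (S : Set R) => x.1 ^ M x) ≤
      LinearMap.ker (LinearMap.toSpanSingleton R P (θ x)) := by
    rw [Ideal.span_le]
    rintro _ ⟨i, rfl⟩
    simpa using hM i
  have h4 : (1 : R) ∈ LinearMap.ker (LinearMap.toSpanSingleton R P (θ x)) :=
    h3 (h2 ▸ Submodule.mem_top)
  simpa using h4

/-- closed subsets -/
def Good (b : Module.Basis κ R P) (k : S → κ → P) (T : Set κ) : Prop :=
  ∀ i, ∀ j ∈ T, ∀ l ∈ (b.repr (k i j)).support, l ∈ T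

lemma eq_on_supp (θ θ' : P →ₗ[R] P) (x : P)
    (h : ∀ l ∈ (b.repr x).support, θ (b l) = θ' (b l)) : θ x = θ' x := by
  rw [← b.linearCombination_repr x]
  simp only [Finsupp.linearCombination_apply, Finsupp.sum, map_sum, map_smul]
  exact Finset.sum_congr rfl fun j hj => by rw [h j hj]

lemma exists_hull (b : Module.Basis κ R P) (k : S → κ → P) (x : κ) :
    ∃ e : ℕ → κ, x ∈ Set.range e ∧ Good b k (Set.range e) := by
  let H : ℕ → Set κ := fun n => Nat.rec {x}
    (fun _ T => ⋃ j ∈ T, ⋃ i : S, ((b.repr (k i j)).support : Set κ)) n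
  have hc : ∀ n, (H n).Countable := by
    intro n
    induction n with
    | zero => exact Set.countable_singleton x
    | succ n ih =>
      exact Set.Countable.biUnion ih fun j _ =>
        Set.countable_iUnion fun i => Finset.countable_toSet _
  have hx : x ∈ ⋃ n, H n := Set.mem_iUnion.2 ⟨0, rfl⟩
  obtain ⟨e, he⟩ := (Set.countable_iUnion hc).exists_eq_range ⟨x, hx⟩
  refine ⟨e, he ▸ hx, ?_⟩
  rw [← he]
  intro i j hj l hl
  obtain ⟨n, hn⟩ := Set.mem_iUnion.1 hj
  refine Set.mem_iUnion.2 ⟨n + 1, ?_⟩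
  exact Set.mem_biUnion hn (Set.mem_iUnion.2 ⟨i, hl⟩)

lemma Data.extend (D : Data b π S k) (T : Set κ) (hT : Good b k T) (θ : P →ₗ[R] P)
    (hθ : ∀ x, π (θ x) = π x) (hk : ∀ i, ∀ j ∈ T, θ (k i j) = 0) (e : ℕ → κ)
    (hT' : Good b k (Set.range e)) :
    ∃ θ' : P →ₗ[R] P, (∀ x, π (θ' x) = π x) ∧ (∀ j ∈ T, θ' (b j) = θ (b j)) ∧
      ∀ i, ∀ j ∈ T ∪ Set.range e, θ' (k i j) = 0 := by
  classical
  let Q : ℕ → (P →ₗ[R] P) → Prop := fun t φ => (∀ x, π (φ x) = π x) ∧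
    (∀ j ∈ T, φ (b j) = θ (b j)) ∧ ∀ i, ∀ t' < t, φ (k i (e t')) = 0
  have hstep : ∀ t (φ : {φ // Q t φ}), ∃ ψ : {ψ // Q (t + 1) ψ},
      ∀ t' < t, ψ.1 (b (e t')) = φ.1 (b (e t')) := by
    rintro t ⟨φ, h1, h2, h3⟩
    obtain ⟨ψ, g1, g2, g3⟩ := D.step φ h1 (T ∪ e '' {t' | t' < t}) (by
      rintro i j (hj | ⟨t', ht', rfl⟩)
      · rw [← hk i j hj]
        exact eq_on_supp (b := b) _ _ _ fun l hl => h2 l (hT i j hj l hl)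
      · exact h3 i t' ht')
      (Finset.image (fun p : S × ℕ => k p.1 (e p.2)) (Finset.univ ×ˢ Finset.range (t + 1))) (by
        intro x hx
        obtain ⟨p, _, rfl⟩ := Finset.mem_image.1 hx
        exact D.ker _ _)
    refine ⟨⟨ψ, g1, fun j hj => (g2 j (Or.inl hj)).trans (h2 j hj), fun i t' ht' => ?_⟩, ?_⟩
    · apply g3
      exact Finset.mem_image.2 ⟨(i, t'), by simpa using Nat.lt_succ_iff.1 ht', rfl⟩
    · intro t' ht'
      exact g2 _ (Or.inr ⟨t', ht', rfl⟩)
  choose nxt hnxt using hstep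
  let seq : (t : ℕ) → {φ // Q t φ} := fun t => Nat.rec
    ⟨θ, hθ, fun _ _ => rfl, fun _ t' ht' => absurd ht' (Nat.not_lt_zero t')⟩
    (fun t φ => nxt t φ) t
  have hseq : ∀ t, ∀ t' < t, (seq (t + 1)).1 (b (e t')) = (seq t).1 (b (e t')) :=
    fun t => hnxt t (seq t)
  have hv : ∀ j, ∃ v : P, π v = π (b j) ∧ (j ∈ T ∪ Set.range e →
      ∃ t0, ∀ t ≥ t0, (seq t).1 (b j) = v) := by
    intro j
    by_cases hj : j ∈ T ∪ Set.range e
    · rcases hj with hj | ⟨t', rfl⟩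
      · exact ⟨θ (b j), hθ _, fun _ => ⟨0, fun t _ => (seq t).2.2.1 j hj⟩⟩
      · refine ⟨(seq (t' + 1)).1 (b (e t')), (seq (t' + 1)).2.1 _, fun _ => ⟨t' + 1, ?_⟩⟩
        intro t ht
        induction t, ht using Nat.le_induction with
        | base => rfl
        | succ t ht ih => rw [hseq t t' (by omega), ih]
    · exact ⟨b j, rfl, fun h => absurd h hj⟩
  choose v hv1 hv2 using hv
  set θ' : P →ₗ[R] P := b.constr R v with hθ'
  have hb : ∀ j, θ' (b j) = v j := fun j => by rw [hθ', Module.Basis.constr_basis]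
  refine ⟨θ', ?_, ?_, ?_⟩
  · have : π ∘ₗ θ' = π := b.ext fun j => by rw [LinearMap.comp_apply, hb, hv1]
    exact fun x => LinearMap.congr_fun this x
  · intro j hj
    obtain ⟨t0, ht0⟩ := hv2 j (Or.inl hj)
    rw [hb, ← ht0 t0 le_rfl]
    exact (seq t0).2.2.1 j hj
  · intro i j hj
    have hsupp : ∀ l ∈ (b.repr (k i j)).support, l ∈ T ∪ Set.range e := by
      intro l hl
      rcases hj with hj | hj
      · exact Or.inl (hT i j hj l hl)
      · exact Or.inr (hT' i j hj l hl)
    have ev1 : ∀ᶠ t in Filter.atTop, (seq t).1 (k i j) = θ' (k i j) := by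
      have : ∀ᶠ t in Filter.atTop, ∀ l ∈ (b.repr (k i j)).support,
          (seq t).1 (b l) = θ' (b l) := by
        rw [Filter.eventually_all_finset]
        intro l hl
        obtain ⟨t0, ht0⟩ := hv2 l (hsupp l hl)
        filter_upwards [Filter.eventually_ge_atTop t0] with t ht
        rw [ht0 t ht, hb]
      filter_upwards [this] with t ht
      exact eq_on_supp (b := b) _ _ _ ht
    have ev2 : ∀ᶠ t in Filter.atTop, (seq t).1 (k i j) = 0 := by
      rcases hj with hj | ⟨t', rfl⟩
      · refine Filter.Eventually.of_forall fun t => ?_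
        rw [← hk i j hj]
        exact eq_on_supp (b := b) _ _ _ fun l hl => (seq t).2.2.1 l (hT i j hj l hl)
      · filter_upwards [Filter.eventually_gt_atTop t'] with t ht
        exact (seq t).2.2.2 i t' ht
    obtain ⟨t, h1, h2⟩ := (ev1.and ev2).exists
    rw [← h1, h2]

lemma Data.exists_total (D : Data b π S k) :
    ∃ θ : P →ₗ[R] P, (∀ x, π (θ x) = π x) ∧ ∀ i j, θ (k i j) = 0 := by
  classical
  let X := {p : Set κ × (P →ₗ[R] P) // Good b k p.1 ∧ (∀ x, π (p.2 x) = π x) ∧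
    ∀ i, ∀ j ∈ p.1, p.2 (k i j) = 0}
  let rel : X → X → Prop := fun p q => p.1.1 ⊆ q.1.1 ∧ ∀ j ∈ p.1.1, q.1.2 (b j) = p.1.2 (b j)
  have htrans : ∀ {p q r : X}, rel p q → rel q r → rel p r := by
    rintro p q r ⟨h1, h2⟩ ⟨h3, h4⟩
    exact ⟨h1.trans h3, fun j hj => (h4 j (h1 hj)).trans (h2 j hj)⟩
  have hchain : ∀ c : Set X, IsChain rel c → ∃ ub, ∀ a ∈ c, rel a ub := by
    intro c hc
    have hv : ∀ j, ∃ v : P, π v = π (b j) ∧ ∀ p ∈ c, j ∈ p.1.1 → p.1.2 (b j) = v := by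
      intro j
      by_cases hj : ∃ p ∈ c, j ∈ p.1.1
      · obtain ⟨p, hp, hj⟩ := hj
        refine ⟨p.1.2 (b j), p.2.2.1 _, fun q hq hjq => ?_⟩
        by_cases hpq : q = p
        · rw [hpq]
        · rcases hc hq hp hpq with h | h
          · exact (h.2 j hjq).symm
          · exact h.2 j hj
      · exact ⟨b j, rfl, fun p hp hjp => absurd ⟨p, hp, hjp⟩ hj⟩
    choose v hv1 hv2 using hv
    set θ' : P →ₗ[R] P := b.constr R v with hθ'
    have hb : ∀ j, θ' (b j) = v j := fun j => by rw [hθ', Module.Basis.constr_basis]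
    refine ⟨⟨(⋃ p ∈ c, p.1.1, θ'), ?_, ?_, ?_⟩, ?_⟩
    · intro i j hj l hl
      obtain ⟨p, hp, hj⟩ := Set.mem_iUnion₂.1 hj
      exact Set.mem_iUnion₂.2 ⟨p, hp, p.2.1 i j hj l hl⟩
    · have : π ∘ₗ θ' = π := b.ext fun j => by rw [LinearMap.comp_apply, hb, hv1]
      exact fun x => LinearMap.congr_fun this x
    · intro i j hj
      obtain ⟨p, hp, hj⟩ := Set.mem_iUnion₂.1 hj
      refine Eq.trans ?_ (p.2.2.2 i j hj)
      refine eq_on_supp (b := b) _ _ _ fun l hl => ?_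
      change θ' (b l) = _
      rw [hb, hv2 l p hp (p.2.1 i j hj l hl)]
    · intro p hp
      exact ⟨fun j hj => Set.mem_iUnion₂.2 ⟨p, hp, hj⟩, fun j hj => by
        rw [hv2 j p hp hj]; exact hb j⟩
  obtain ⟨m, hm⟩ := exists_maximal_of_chains_bounded hchain htrans
  refine ⟨m.1.2, m.2.2.1, fun i j => m.2.2.2 i j ?_⟩
  obtain ⟨e, hje, he⟩ := exists_hull b k j
  obtain ⟨θ', h1, h2, h3⟩ := D.extend m.1.1 m.2.1 m.1.2 m.2.2.1 m.2.2.2 e he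
  have hgood : Good b k (m.1.1 ∪ Set.range e) := by
    rintro i j (hj | hj) l hl
    · exact Or.inl (m.2.1 i j hj l hl)
    · exact Or.inr (he i j hj l hl)
  have := hm ⟨(m.1.1 ∪ Set.range e, θ'), hgood, h1, h3⟩ ⟨Set.subset_union_left, h2⟩
  exact this.1 (Or.inr hje)

end

lemma exists_section (π : P →ₗ[R] A) (hπ : Function.Surjective π) (r : R)
    (h : Module.Free (Localization.Away r) (LocalizedModule (Submonoid.powers r) A)) :
    ∃ σ : A →ₗ[R] LocalizedModule (Submonoid.powers r) P,
      ∀ a, mapL r π (σ a) = mkL R A r a := by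
  have hs : Function.Surjective (LocalizedModule.map (Submonoid.powers r) π) :=
    LocalizedModule.map_surjective _ _ hπ
  obtain ⟨τ, hτ⟩ := Module.projective_lifting_property
    (R := Localization (Submonoid.powers r)) (LocalizedModule.map (Submonoid.powers r) π)
    LinearMap.id hs
  refine ⟨τ.restrictScalars R ∘ₗ mkL R A r, fun a => ?_⟩
  exact LinearMap.congr_fun hτ (mkL R A r a)

/-- The kernel of a surjection from a free module to a locally free module is projective. -/
lemma exists_split [Module.Free R P] (π : P →ₗ[R] A) (hπ : Function.Surjective π)
    (hA : IsLocallyFreeModule R A) :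
    ∃ θ : P →ₗ[R] P, (∀ x, π (θ x) = π x) ∧ ∀ x, π x = 0 → θ x = 0 := by
  obtain ⟨ι, s, hs, hfree⟩ := hA
  obtain ⟨S, hS, hspan⟩ := (Ideal.span_eq_top_iff_finite _).1 hs
  let b := Module.Free.chooseBasis R P
  have h1 : ∀ i : S, ∃ σ : A →ₗ[R] LocalizedModule (Submonoid.powers (i : R)) P,
      ∀ a, mapL (i : R) π (σ a) = mkL R A (i : R) a := by
    rintro ⟨r, hr⟩
    obtain ⟨i, rfl⟩ := hS hr
    exact exists_section π hπ _ (hfree i)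
  choose σ hσ using h1
  have h2 : ∀ (i : S) (j), ∃ x : P, π x = 0 ∧ ∃ n : ℕ, mkL R P (i : R) x =
      (i : R) ^ n • (mkL R P (i : R) (b j) - σ i (π (b j))) := by
    intro i j
    obtain ⟨n, z, hz1, hz2⟩ := exists_lift π (i : R) 0
      (mkL R P (i : R) (b j) - σ i (π (b j))) (by
        rw [map_sub, mapL_mk, hσ, sub_self, map_zero, map_zero])
    exact ⟨z, by simpa using hz2, n, hz1⟩
  choose k hk1 hk2 using h2
  have D : Data b π S k := ⟨hspan, hk1, fun i => ⟨σ i, hσ i, hk2 i⟩⟩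
  obtain ⟨θ, hθ, hθk⟩ := D.exists_total
  exact ⟨θ, hθ, D.kill θ hθk⟩

end LocFree

/-- Let `R` be a commutative ring whose projective modules are all locally free
(e.g. `R` noetherian), `A` a locally free `R`-module and `0 → I → P → A → 0` an
exact sequence of `R`-modules with `P` free. Then `I` is locally free. -/
theorem kernel_is_locally_free {R : Type} [CommRing R]
    (hproj : ∀ (M : Type) [AddCommGroup M] [Module R M],
      Module.Projective R M → IsLocallyFreeModule R M)
    {I P A : Type} [AddCommGroup I] [Module R I] [AddCommGroup P] [Module R P]
    [AddCommGroup A] [Module R A] [Module.Free R P]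
    (f : I →ₗ[R] P) (g : P →ₗ[R] A)
    (hf : Function.Injective f) (hg : Function.Surjective g)
    (hexact : LinearMap.range f = LinearMap.ker g)
    (hA : IsLocallyFreeModule R A) :
    IsLocallyFreeModule R I := by
  obtain ⟨θ, hθ, hker⟩ := LocFree.exists_split g hg hA
  apply hproj
  have hmem : ∀ x, (LinearMap.id - θ : P →ₗ[R] P) x ∈ LinearMap.range f := by
    intro x
    rw [hexact, LinearMap.mem_ker]
    simp [hθ]
  let q : P →ₗ[R] I := (LinearEquiv.ofInjective f hf).symm.toLinearMap ∘ₗ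
    (LinearMap.id - θ : P →ₗ[R] P).codRestrict (LinearMap.range f) hmem
  refine Module.Projective.of_split f q ?_
  ext x
  apply hf
  have h0 : g (f x) = 0 := by
    rw [← LinearMap.mem_ker, ← hexact]
    exact LinearMap.mem_range_self f x
  have h1 : ∀ y, f ((LinearEquiv.ofInjective f hf).symm y) = y := fun y => by
    rw [← LinearEquiv.ofInjective_apply (h := hf), LinearEquiv.apply_symm_apply]
  simp only [q, LinearMap.comp_apply, LinearEquiv.coe_coe, h1, LinearMap.codRestrict_apply,
    LinearMap.sub_apply, LinearMap.id_apply, hker _ h0, sub_zero]
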